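/- Let κ be an infinite cardinal with κ^ω = κ and G = ℤ^(κ). Suppose: (i) (p_{T,n} : T ∈ 𝒯, n ∈ ω) is a family of pairwise Rudin–Keisler incomparable selective ultrafilters on ω with l(T) ∈ p_{T,n}; (ii) (h_ξ : ω ≤ ξ < κ) is an enumeration of G^ω with supp h_ξ(n) ⊆ ξ for all n ∈ ω and ω ≤ ξ < κ; (iii) (J_{T,n} : T ∈ 𝒯, n ∈ ω) is a family of pairwise disjoint subsets of κ \ ω such that for each (T,n) the classes [h_ξ]_{p_{T,n}} (ξ ∈ J_{T,n}) are pairwise distinct and {[h_ξ]_{p_{T,n}} : ξ ∈ J_{T,n}} ∪ {[χ⃗_ζ]_{p_{T,n}} : ζ < κ} is a ℚ-linearly independent subset of Ult(ℚ, p_{T,n}). Let d ∈ G be nonzero, let r be an injective sequence in G, and let D ⊆ κ be countably infinite with: (1) ω ∪ supp d ∪ ⋃_{n∈ω} supp r(n) ⊆ D; (2) D ∩ J_{T,n} ≠ ∅ for infinitely many pairs (T,n); (3) supp h_ξ(n) ⊆ D for all n ∈ ω and all ξ ∈ D \ ω. Then there exists a group homomorphism φ : ℤ^(D) → 𝕋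 such that: φ(d) ≠ 0; for every T ∈ 𝒯, n ∈ ω and ξ ∈ D ∩ J_{T,n}, the sequence (φ(h_ξ(k)) : k ∈ ω) has p_{T,n}-limit φ(χ_ξ); and the sequence (φ(r(n)) : n ∈ ω) does not converge in 𝕋. -/

import Mathlib

open Cardinal Filter Set Pointwise

noncomputable section

/-- A free (nonprincipal) ultrafilter on ω. -/
def IsFreeUltrafilter (p : Ultrafilter ℕ) : Prop := ∀ n : ℕ, p ≠ pure n

/-- A selective ultrafilter on ω. -/
def IsSelective (p : Ultrafilter ℕ) : Prop :=
  IsFreeUltrafilter p ∧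
  ∀ A : ℕ → Set ℕ,
    (∀ k, (A k).Nonempty) → (Pairwise fun k l => Disjoint (A k) (A l)) →
    (⋃ k, A k) = Set.univ →
    (∃ k, A k ∈ p) ∨ ∃ B ∈ p, ∀ k, ∃! n, n ∈ B ∩ A k

/-- Rudin–Keisler order: `U ≤ V` iff `V = f_*(U)` for some `f`. -/
def RKle (U V : Ultrafilter ℕ) : Prop := ∃ f : ℕ → ℕ, Ultrafilter.map f U = V

/-- Rudin–Keisler incomparability. -/
def RKIncomp (U V : Ultrafilter ℕ) : Prop := ¬ RKle U V ∧ ¬ RKle V U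

/-- The index set of order type (the initial ordinal of) `κ`. -/
abbrev Idx (κ : Cardinal) : Type _ := ↥(Set.Iio κ.ord)

/-- The free abelian group `ℤ^(κ)` of finitely supported integer functions on `κ`. -/
abbrev GZ (κ : Cardinal) := Idx κ →₀ ℤ

/-- The ℚ-vector space `ℚ^(κ)` of finitely supported rational functions on `κ`. -/
abbrev GQ (κ : Cardinal) := Idx κ →₀ ℚ

/-- The canonical embedding `ℤ^(κ) → ℚ^(κ)`. -/
def toQ (κ : Cardinal) (f : GZ κ) : GQ κ :=
  Finsupp.mapRange (Int.cast : ℤ → ℚ) Int.cast_zero f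

/-- The characteristic function `χ_ξ`. -/
def chi (κ : Cardinal) (ξ : Idx κ) : GZ κ := Finsupp.single ξ 1

/-- The class `[f]_p` of a sequence `f : ω → ℤ^(κ)` in the ultrapower
`Ult(ℚ, p) = (ℚ^(κ))^ω / p`, realized as a germ. -/
def cls (κ : Cardinal) (p : Ultrafilter ℕ) (f : ℕ → GZ κ) :
    Filter.Germ (↑p : Filter ℕ) (GQ κ) :=
  (↑(fun n => toQ κ (f n)) : Filter.Germ (↑p : Filter ℕ) (GQ κ))

/-- The class `[χ⃗_ξ]_p` of the constant sequence with value `χ_ξ`. -/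
def clsChi (κ : Cardinal) (p : Ultrafilter ℕ) (ξ : Idx κ) :
    Filter.Germ (↑p : Filter ℕ) (GQ κ) :=
  cls κ p (fun _ => chi κ ξ)

/-- `cls` as an additive homomorphism. -/
def clsHom (κ : Cardinal) (p : Ultrafilter ℕ) :
    (ℕ → GZ κ) →+ Filter.Germ (↑p : Filter ℕ) (GQ κ) :=
  AddMonoidHom.mk' (cls κ p) (by
    intro a b
    unfold cls
    have h : (fun n => toQ κ ((a + b) n)) =
        (fun n => toQ κ (a n)) + (fun n => toQ κ (b n)) := by
      funext n
      simp only [Pi.add_apply, toQ]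
      exact Finsupp.mapRange_add (fun x y => by push_cast; ring) _ _
    rw [h, ← Filter.Germ.coe_add])

/-- `Ult(ℤ, p)`: the subgroup of `Ult(ℚ, p)` consisting of classes of
integer-valued sequences. -/
def UltZ (κ : Cardinal) (p : Ultrafilter ℕ) :
    AddSubgroup (Filter.Germ (↑p : Filter ℕ) (GQ κ)) :=
  (clsHom κ p).range

/-- `ℱ` is linearly independent mod `A*`. -/
def LinIndepMod (κ : Cardinal) (A : Set ℕ) (F : Set (ℕ → GZ κ)) : Prop :=
  ∀ p : Ultrafilter ℕ, IsFreeUltrafilter p → A ∈ p →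
    (∀ f ∈ F, ∀ g ∈ F, f ≠ g → cls κ p f ≠ cls κ p g) ∧
    LinearIndependent ℚ
      (Sum.elim (fun f : F => cls κ p ↑f) (fun ξ : Idx κ => clsChi κ p ξ))

/-- `ℰ` is maximal (w.r.t. inclusion) among subsets linearly independent mod `A*`. -/
def MaximalLinIndepMod (κ : Cardinal) (A : Set ℕ) (E : Set (ℕ → GZ κ)) : Prop :=
  LinIndepMod κ A E ∧ ∀ E' : Set (ℕ → GZ κ), LinIndepMod κ A E' → E ⊆ E' → E' = E

/-- A finite tower in ω: a finite decreasing sequence of infinite subsets of ω. -/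
def IsTower (T : List (Set ℕ)) : Prop :=
  (∀ A ∈ T, A.Infinite) ∧
  ∀ i : ℕ, ∀ h : i + 1 < T.length, T.get ⟨i + 1, h⟩ ⊆ T.get ⟨i, Nat.lt_of_succ_lt h⟩

/-- `l(T)`: the last term of a finite tower, with `l(∅) = ω`. -/
def lastOf (T : List (Set ℕ)) : Set ℕ := T.getLastD Set.univ

/-- `x` is a `p`-limit of the sequence `s`. -/
def IsPLim {X : Type*} [TopologicalSpace X] (p : Ultrafilter ℕ) (s : ℕ → X) (x : X) : Prop :=
  ∀ U ∈ nhds x, {n | s n ∈ U} ∈ p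

/-- Countable compactness: every countable open cover has a finite subcover. -/
def CountablyCompactSp (X : Type*) [TopologicalSpace X] : Prop :=
  ∀ 𝒰 : Set (Set X), 𝒰.Countable → (∀ u ∈ 𝒰, IsOpen u) → ⋃₀ 𝒰 = Set.univ →
    ∃ ℱ ⊆ 𝒰, ℱ.Finite ∧ ⋃₀ ℱ = Set.univ


/-- membership in `ℤ^(D)` from a support condition. -/
lemma mem_suppD {κ : Cardinal} {D : Set (Idx κ)} {x : GZ κ}
    (h : ↑x.support ⊆ D) : x ∈ Finsupp.supported ℤ ℤ D :=
  (Finsupp.mem_supported ℤ x).2 h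

lemma chi_mem_suppD {κ : Cardinal} {D : Set (Idx κ)} {ξ : Idx κ}
    (h : ξ ∈ D) : chi κ ξ ∈ Finsupp.supported ℤ ℤ D := by
  apply (Finsupp.mem_supported ℤ _).2
  intro a ha
  have : a ∈ ({ξ} : Finset (Idx κ)) := Finsupp.support_single_subset ha
  rw [Finset.mem_singleton] at this
  subst this
  exact h

/-! A homomorphism on `ℤ^(κ)` is a point of the compact group `𝕋^κ`. If finitely many sequences in
`ℤ^(κ)` are, together with the constant sequences `χ_ζ`, independent modulo an ultrafilter `p`, then
the integrals of a trigonometric polynomial along them and over the torus agree `p`-eventually, so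
by density of these polynomials the sequences can be given prescribed approximate values by points
of any nonempty open set. Hence the requirement that `φ (h_ξ k)` be close to `φ χ_ξ` can be met
inside every nonempty open set for `p`-almost all `k`.

Selective, pairwise Rudin–Keisler incomparable ultrafilters admit members that are disjoint and so
sparse that a game in which each of them serves its own requirement can be played along `ω`: the set
of moves allowed at a given time depends only on the finitely many states that were reachable just
after the preceding move. The play yields a decreasing sequence of open sets, and a point of the
intersection of their closures is the required homomorphism. Nonvanishing at `d` is an open
condition, and oscillation along `r` is a countable intersection of dense open ones, since `r` is
injective and so a nontrivial combination of `r n` and the `χ_ζ` vanishes for at most one `n`.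
-/

open Topology MeasureTheory UnitAddTorus

section Characters

instance nontrivial_addCircle (p : ℝ) [hp : Fact (0 < p)] : Nontrivial (AddCircle p) :=
  ⟨((p / 2 : ℝ) : AddCircle p), 0, norm_ne_zero_iff.1 <| by
    rw [AddCircle.norm_half_period_eq]
    exact (half_pos (abs_pos.2 hp.out.ne')).ne'⟩

theorem exists_linearCombination_ne_zero {I : Type*} (A : Type*) [AddCommGroup A] [DivisibleBy A ℤ]
    [Nontrivial A] {x : I →₀ ℤ} (hx : x ≠ 0) :
    ∃ φ : I → A, Finsupp.linearCombination ℤ φ x ≠ 0 := by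
  classical
  obtain ⟨a, ha⟩ := Finsupp.ne_iff.1 hx
  obtain ⟨t, ht⟩ := exists_ne (0 : A)
  refine ⟨Pi.single a (DivisibleBy.div t (x a)), ?_⟩
  rwa [Finsupp.linearCombination_apply, Finsupp.sum_eq_single a
    (fun b _ hb => by rw [Pi.single_eq_of_ne hb, smul_zero]) (by simp), Pi.single_eq_same,
    DivisibleBy.div_cancel t ha]

theorem integral_eq_zero_of_map_add_eq_mul {X 𝕜 : Type*} [AddGroup X] [MeasurableSpace X]
    [MeasurableAdd X] [RCLike 𝕜] (μ : Measure X) [μ.IsAddLeftInvariant] {f : X → 𝕜}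
    (hf : ∀ x y, f (x + y) = f x * f y) {g : X} (hg : f g ≠ 1) : ∫ x, f x ∂μ = 0 := by
  have h : f g * ∫ x, f x ∂μ = ∫ x, f x ∂μ := by
    rw [← integral_const_mul, ← integral_add_left_eq_self f g]
    simp only [hf]
  exact not_not.1 fun h0 => hg ((mul_eq_right₀ h0).1 h)

theorem integrable_of_continuous_of_compactSpace {X E : Type*} [TopologicalSpace X] [CompactSpace X]
    [MeasurableSpace X] [OpensMeasurableSpace X] [NormedAddCommGroup E] (μ : Measure X)
    [IsFiniteMeasureOnCompacts μ] {f : X → E} (hf : Continuous f) : Integrable f μ :=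
  hf.integrable_of_hasCompactSupport (HasCompactSupport.of_compactSpace f)

theorem dist_integral_comp_le_dist {X Y E : Type*} [TopologicalSpace X] [CompactSpace X]
    [MeasurableSpace X] [OpensMeasurableSpace X] [TopologicalSpace Y] [CompactSpace Y]
    [NormedAddCommGroup E] [NormedSpace ℝ E]
    (μ : Measure X) [IsProbabilityMeasure μ] (f g : C(Y, E)) {u : X → Y} (hu : Continuous u) :
    dist (∫ x, f (u x) ∂μ) (∫ x, g (u x) ∂μ) ≤ dist f g := by
  have hf : Integrable (fun x => f (u x)) μ :=
    integrable_of_continuous_of_compactSpace μ (f.continuous.comp hu)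
  have hg : Integrable (fun x => g (u x)) μ :=
    integrable_of_continuous_of_compactSpace μ (g.continuous.comp hu)
  rw [dist_eq_norm, ← integral_sub hf hg]
  refine (norm_integral_le_of_norm_le_const (C := dist f g)
    (Eventually.of_forall fun x => ?_)).trans_eq (by simp)
  rw [← dist_eq_norm]
  exact ContinuousMap.dist_apply_le_dist _

variable {d : Type*} [Fintype d]

theorem mFourier_eq_toCircle (n : d → ℤ) (z : UnitAddTorus d) :
    mFourier n z = AddCircle.toCircle (∑ i, n i • z i) := by
  simp only [mFourier, ContinuousMap.coe_mk, fourier_apply]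
  induction (Finset.univ : Finset d) using Finset.cons_induction with
  | empty => simp
  | cons a s ha ih => rw [Finset.prod_cons, Finset.sum_cons, AddCircle.toCircle_add, ih]; simp

theorem mFourier_apply_add (n : d → ℤ) (x y : UnitAddTorus d) :
    mFourier n (x + y) = mFourier n x * mFourier n y := by
  simp only [mFourier_eq_toCircle, Pi.add_apply, smul_add, Finset.sum_add_distrib,
    AddCircle.toCircle_add, Circle.coe_mul]

theorem mFourier_eq_one_iff {c : d →₀ ℤ} {z : UnitAddTorus d} :
    mFourier c z = 1 ↔ Finsupp.linearCombination ℤ z c = 0 := by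
  rw [mFourier_eq_toCircle, Circle.coe_eq_one, ← AddCircle.toCircle_zero,
    (AddCircle.injective_toCircle one_ne_zero).eq_iff, Finsupp.linearCombination_apply,
    Finsupp.sum_fintype _ _ (by simp)]

variable {X α : Type*} [AddCommGroup X] [TopologicalSpace X] [IsTopologicalAddGroup X]
  [CompactSpace X] {l : Filter α}

theorem eventually_integral_comp_eq_of_mem_span_mFourier [MeasurableSpace X] [BorelSpace X]
    (μ : Measure X) [IsProbabilityMeasure μ]
    [μ.IsAddLeftInvariant] (ν : Measure (UnitAddTorus d)) [IsProbabilityMeasure ν]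
    [ν.IsAddLeftInvariant] {Φ : α → X →+ UnitAddTorus d} (hΦ : ∀ k, Continuous (Φ k))
    (hc : ∀ c : d →₀ ℤ, c ≠ 0 → ∀ᶠ k in l, ∃ x, Finsupp.linearCombination ℤ (Φ k x) c ≠ 0)
    {g : C(UnitAddTorus d, ℂ)} (hg : g ∈ Submodule.span ℂ (range (mFourier (d := d)))) :
    ∀ᶠ k in l, ∫ x, g (Φ k x) ∂μ = ∫ z, g z ∂ν := by
  induction hg using Submodule.span_induction with
  | mem f hf =>
    obtain ⟨n, rfl⟩ := hf
    obtain ⟨c, rfl⟩ : ∃ c : d →₀ ℤ, ⇑c = n := Finsupp.equivFunOnFinite.surjective n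
    obtain rfl | hc0 := eq_or_ne c 0
    · simp [mFourier_zero]
    obtain ⟨z, hz⟩ := exists_linearCombination_ne_zero UnitAddCircle hc0
    filter_upwards [hc c hc0] with k ⟨x, hx⟩
    rw [integral_eq_zero_of_map_add_eq_mul ν (mFourier_apply_add c) (mFourier_eq_one_iff.not.2 hz)]
    exact integral_eq_zero_of_map_add_eq_mul μ (g := x)
      (fun x y => by rw [map_add, mFourier_apply_add]) (mFourier_eq_one_iff.not.2 hx)
  | zero => simp
  | add f g _ _ hf hg =>
    filter_upwards [hf, hg] with k hfk hgk
    simp only [ContinuousMap.add_apply]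
    rw [integral_add (integrable_of_continuous_of_compactSpace ν f.continuous)
      (integrable_of_continuous_of_compactSpace ν g.continuous), ← hfk, ← hgk]
    exact integral_add
      (integrable_of_continuous_of_compactSpace μ (f.continuous.comp (hΦ k)))
      (integrable_of_continuous_of_compactSpace μ (g.continuous.comp (hΦ k)))
  | smul c f _ hf =>
    filter_upwards [hf] with k hfk
    simp only [ContinuousMap.smul_apply, integral_smul, hfk]

theorem exists_continuousMap_integral_ne_zero {Y : Type*} [PseudoMetricSpace Y] [CompactSpace Y]
    [MeasurableSpace Y] [OpensMeasurableSpace Y] (ν : Measure Y) [IsFiniteMeasureOnCompacts ν]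
    [ν.IsOpenPosMeasure] {O : Set Y} (hO : IsOpen O) (hne : O.Nonempty) :
    ∃ f : C(Y, ℂ), ∫ y, f y ∂ν ≠ 0 ∧ ∀ y ∉ O, f y = 0 := by
  obtain ⟨y₀, hy₀⟩ := hne
  obtain ⟨ε, hε, hball⟩ := Metric.isOpen_iff.1 hO y₀ hy₀
  let b : Y → ℝ := fun y => max 0 (ε - dist y y₀)
  have hb : Continuous b := by fun_prop
  have hb_pos : 0 < ∫ y, b y ∂ν :=
    hb.integral_pos_of_hasCompactSupport_nonneg_nonzero (x := y₀)
      (HasCompactSupport.of_compactSpace b) (fun y => le_max_left _ _)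
      (by simpa [b] using hε)
  refine ⟨⟨fun y => (b y : ℂ), by fun_prop⟩, ?_, fun y hy => ?_⟩
  · simpa [integral_complex_ofReal] using hb_pos.ne'
  · have : ε ≤ dist y y₀ := not_lt.1 fun h => hy (hball h)
    simpa [b] using this

theorem eventually_exists_apply_mem_of_isOpen {ι : Type*} [Finite ι] {Φ : α → X →+ UnitAddTorus ι}
    (hΦ : ∀ k, Continuous (Φ k))
    (hc : ∀ c : ι →₀ ℤ, c ≠ 0 → ∀ᶠ k in l, ∃ x, Finsupp.linearCombination ℤ (Φ k x) c ≠ 0)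
    {O : Set (UnitAddTorus ι)} (hO : IsOpen O) (hne : O.Nonempty) :
    ∀ᶠ k in l, ∃ x, Φ k x ∈ O := by
  have := Fintype.ofFinite ι
  borelize X
  let μ : Measure X := Measure.addHaarMeasure ⊤
  let ν : Measure (UnitAddTorus ι) := Measure.addHaarMeasure ⊤
  have : IsProbabilityMeasure μ := ⟨Measure.addHaarMeasure_self (K₀ := ⊤)⟩
  have : IsProbabilityMeasure ν := ⟨Measure.addHaarMeasure_self (K₀ := ⊤)⟩
  obtain ⟨f, hf, hfO⟩ := exists_continuousMap_integral_ne_zero ν hO hne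
  have hf_mem : f ∈ (Submodule.span ℂ (range (mFourier (d := ι)))).topologicalClosure := by
    rw [span_mFourier_closure_eq_top]; trivial
  obtain ⟨g, hg, hfg⟩ := Metric.mem_closure_iff.1 hf_mem (‖∫ z, f z ∂ν‖ / 2) (by positivity)
  filter_upwards [eventually_integral_comp_eq_of_mem_span_mFourier μ ν hΦ hc hg] with k hk
  by_contra! hmiss
  have hμ := dist_integral_comp_le_dist μ f g (hΦ k)
  have hν := dist_integral_comp_le_dist ν f g continuous_id
  simp only [hfO _ (hmiss _), integral_zero, hk, dist_zero_left] at hμ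
  rw [dist_eq_norm] at hν
  have := norm_le_norm_sub_add (∫ z, f z ∂ν) (∫ z, g z ∂ν)
  simp only [id_eq] at hν
  linarith

end Characters

section Independence

/-- The sequences `u i`, indexed along the filter `l`, are independent over `ℤ` modulo `l`: every
nontrivial integer combination of them is eventually nonzero along `l`. -/
def EventuallyIndependent {α ι M : Type*} [AddCommGroup M] (l : Filter α) (u : ι → α → M) : Prop :=
  ∀ c : ι →₀ ℤ, c ≠ 0 → ∀ᶠ k in l, Finsupp.linearCombination ℤ (fun i => u i k) c ≠ 0

variable {α ι I L : Type*} {l : Filter α}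

theorem continuous_linearCombination_apply {R A : Type*} [Semiring R] [AddCommMonoid A] [Module R A]
    [TopologicalSpace A] [ContinuousAdd A] [ContinuousConstSMul R A] (x : I →₀ R) :
    Continuous fun φ : I → A => Finsupp.linearCombination R φ x := by
  simp only [Finsupp.linearCombination_apply, Finsupp.sum]
  fun_prop

theorem EventuallyIndependent.comp_injective {M κ : Type*} [AddCommGroup M] {u : ι → α → M}
    (hu : EventuallyIndependent l u) {f : κ → ι} (hf : Function.Injective f) :
    EventuallyIndependent l (u ∘ f) := fun c hc => by
  simpa [Finsupp.linearCombination_mapDomain, Function.comp_def] using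
    hu (c.mapDomain f) (by simpa using (Finsupp.mapDomain_injective hf).ne hc)

theorem EventuallyIndependent.of_map {M N : Type*} [AddCommGroup M] [AddCommGroup N]
    {u : ι → α → M} (f : M →+ N)
    (hu : EventuallyIndependent l fun i k => f (u i k)) : EventuallyIndependent l u := by
  intro c hc
  filter_upwards [hu c hc] with k hk h0
  have hlc := Finsupp.apply_linearCombination ℤ f.toIntLinearMap (fun i => u i k) c
  rw [h0, map_zero] at hlc
  exact hk hlc.symm

theorem eventuallyIndependent_of_linearIndependent_germ {M : Type*} [AddCommGroup M]
    {p : Ultrafilter α} {u : ι → α → M}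
    (hu : LinearIndependent ℤ fun i => (u i : Germ (p : Filter α) M)) :
    EventuallyIndependent (p : Filter α) u := by
  intro c hc
  refine Ultrafilter.eventually_not.2 fun h0 => hc (linearIndependent_iff.1 hu c ?_)
  have hgerm := Finsupp.apply_linearCombination ℤ
    (Germ.coeAddHom (p : Filter α) : (α → M) →+ Germ (p : Filter α) M).toIntLinearMap u c
  refine hgerm.symm.trans (Germ.coe_eq.2 ?_)
  filter_upwards [h0] with k hk
  simpa [Finsupp.linearCombination_apply, Finsupp.sum] using hk

theorem eventuallyIndependent_of_linearIndependent_cls {κ : Cardinal} {p : Ultrafilter ℕ}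
    {g : L → ℕ → GZ κ}
    (hg : LinearIndependent ℚ (Sum.elim (fun ξ => cls κ p (g ξ)) (fun ζ => clsChi κ p ζ))) :
    EventuallyIndependent (p : Filter ℕ) (Sum.elim g fun ζ _ => Finsupp.single ζ 1) := by
  refine .of_map (Finsupp.mapRange.addMonoidHom (Int.castAddHom ℚ))
    (eventuallyIndependent_of_linearIndependent_germ ?_)
  convert hg.restrict_scalars' ℤ using 1
  ext (ξ | ζ) <;> rfl

theorem EventuallyIndependent.eventually_exists_mem_of_finite [Finite ι] {u : ι → α → I →₀ ℤ}
    (hu : EventuallyIndependent l u) {O : Set (ι → UnitAddCircle)} (hO : IsOpen O)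
    (hne : O.Nonempty) :
    ∀ᶠ k in l, ∃ φ : I → UnitAddCircle, (fun i => Finsupp.linearCombination ℤ φ (u i k)) ∈ O := by
  let Φ (k : α) : (I → UnitAddCircle) →+ UnitAddTorus ι :=
    AddMonoidHom.mk' (fun φ i => Finsupp.linearCombination ℤ φ (u i k)) fun φ ψ => by
      ext i
      simp [Finsupp.linearCombination_apply, Finsupp.sum_add]
  refine eventually_exists_apply_mem_of_isOpen (Φ := Φ)
    (fun k => continuous_pi fun i => continuous_linearCombination_apply (u i k)) (fun c hc => ?_)
    hO hne
  filter_upwards [hu c hc] with k hk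
  obtain ⟨φ, hφ⟩ := exists_linearCombination_ne_zero UnitAddCircle hk
  exact ⟨φ, by rwa [Finsupp.apply_linearCombination] at hφ⟩

theorem EventuallyIndependent.eventually_exists_mem {u : ι → α → I →₀ ℤ}
    (hu : EventuallyIndependent l u) {O : Set (ι → UnitAddCircle)} (hO : IsOpen O)
    (hne : O.Nonempty) :
    ∀ᶠ k in l, ∃ φ : I → UnitAddCircle, (fun i => Finsupp.linearCombination ℤ φ (u i k)) ∈ O := by
  obtain ⟨z, hz⟩ := hne
  obtain ⟨F, V, hV, hVO⟩ := isOpen_pi_iff.1 hO z hz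
  have hF := (hu.comp_injective (f := ((↑) : F → ι)) Subtype.val_injective)
    |>.eventually_exists_mem_of_finite (O := univ.pi fun i : F => V i)
      (isOpen_set_pi finite_univ fun i _ => (hV i i.2).1)
      ⟨fun i => z i, fun i _ => (hV i i.2).2⟩
  filter_upwards [hF] with k ⟨φ, hφ⟩
  exact ⟨φ, hVO fun i hi => hφ ⟨i, hi⟩ trivial⟩

theorem EventuallyIndependent.eventually_nonempty_inter_dist_lt {g : L → α → I →₀ ℤ} {b : L → I}
    (hg : EventuallyIndependent l (Sum.elim g fun ζ _ => Finsupp.single ζ 1))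
    {U : Set (I → UnitAddCircle)} (hU : IsOpen U) (hne : U.Nonempty) {F : Set L} (hF : F.Finite)
    {ε : ℝ} (hε : 0 < ε) :
    ∀ᶠ k in l, (U ∩ {φ | ∀ ξ ∈ F,
      dist (Finsupp.linearCombination ℤ φ (g ξ k)) (φ (b ξ)) < ε}).Nonempty := by
  obtain ⟨φ₀, hφ₀⟩ := hne
  let O : Set (L ⊕ I → UnitAddCircle) :=
    {z | z ∘ Sum.inr ∈ U} ∩ ⋂ ξ ∈ F, {z | dist (z (.inl ξ)) (z (.inr (b ξ))) < ε}
  have hO : IsOpen O :=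
    (hU.preimage (by fun_prop)).inter (hF.isOpen_biInter fun ξ _ =>
      isOpen_lt (by fun_prop) continuous_const)
  have hOne : O.Nonempty := ⟨Sum.elim (φ₀ ∘ b) φ₀, hφ₀, by simpa using fun _ _ => hε⟩
  filter_upwards [hg.eventually_exists_mem hO hOne] with k ⟨φ, hφU, hφF⟩
  simp only [mem_iInter, mem_ofPred_eq, Sum.elim_inl, Sum.elim_inr,
    Finsupp.linearCombination_single, one_smul] at hφF
  exact ⟨φ, by simpa [Function.comp_def] using hφU, hφF⟩

theorem eventuallyIndependent_cofinite_of_injective {r : α → I →₀ ℤ} (hr : Function.Injective r) :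
    EventuallyIndependent cofinite
      (fun (o : Option I) k => o.elim (r k) fun ζ => Finsupp.single ζ 1) := by
  intro c hc
  have hlc (k : α) : Finsupp.linearCombination ℤ
      (fun o : Option I => o.elim (r k) fun ζ => Finsupp.single ζ 1) c = c none • r k + c.some := by
    rw [Finsupp.linearCombination_option]
    simp [Function.comp_def, Finsupp.linearCombination_apply]
  simp only [hlc]
  by_cases h0 : c none = 0
  · refine Eventually.of_forall fun k hk => hc ?_
    ext (_ | ζ)
    · exact h0
    · simpa [h0] using DFunLike.congr_fun hk ζ
  · have hinj : Function.Injective fun k => c none • r k + c.some :=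
      (add_left_injective _).comp ((smul_right_injective _ h0).comp hr)
    exact (finite_singleton 0).preimage hinj.injOn |>.compl_mem_cofinite

theorem eventually_exists_linearCombination_mem {r : α → I →₀ ℤ} (hr : Function.Injective r)
    {U : Set (I → UnitAddCircle)} (hU : IsOpen U) (hUne : U.Nonempty)
    {V : Set UnitAddCircle} (hV : IsOpen V) (hVne : V.Nonempty) :
    ∀ᶠ n in cofinite, ∃ φ ∈ U, Finsupp.linearCombination ℤ φ (r n) ∈ V := by
  obtain ⟨φ₀, hφ₀⟩ := hUne
  obtain ⟨t, ht⟩ := hVne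
  have hO : IsOpen {z : Option I → UnitAddCircle | z ∘ some ∈ U ∧ z none ∈ V} :=
    (hU.preimage (by fun_prop)).inter (hV.preimage (by fun_prop))
  filter_upwards [(eventuallyIndependent_cofinite_of_injective hr).eventually_exists_mem hO
    ⟨fun o => o.elim t φ₀, hφ₀, ht⟩] with n ⟨φ, hφU, hφV⟩
  exact ⟨φ, by simpa [Function.comp_def] using hφU, hφV⟩

end Independence

section SelectiveUltrafilters

theorem isFreeUltrafilter_iff_le_cofinite {p : Ultrafilter ℕ} :
    IsFreeUltrafilter p ↔ (p : Filter ℕ) ≤ cofinite := by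
  refine ⟨fun h => p.le_cofinite_or_eq_pure.resolve_right fun ⟨n, hn⟩ => h n hn, ?_⟩
  rintro h n rfl
  simpa using h (finite_singleton n).compl_mem_cofinite

theorem IsSelective.le_cofinite {p : Ultrafilter ℕ} (hp : IsSelective p) :
    (p : Filter ℕ) ≤ cofinite :=
  isFreeUltrafilter_iff_le_cofinite.1 hp.1

theorem IsSelective.exists_fiber_mem_or_injOn {p : Ultrafilter ℕ} (hp : IsSelective p)
    (g : ℕ → ℕ) : (∃ c, g ⁻¹' {c} ∈ p) ∨ ∃ B ∈ p, InjOn g B := by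
  obtain hfin | hinf := (range g).finite_or_infinite
  · left
    have hcover : ⋃ c ∈ range g, g ⁻¹' {c} ∈ p := by
      rw [biUnion_preimage_singleton, preimage_range]
      exact univ_mem
    obtain ⟨c, -, hc⟩ := (Ultrafilter.finite_biUnion_mem_iff hfin).1 hcover
    exact ⟨c, hc⟩
  · let e : ℕ → ℕ := Nat.nth (· ∈ range g)
    have he : range e = range g := Nat.range_nth_of_infinite hinf
    have he_inj : Function.Injective e := Nat.nth_injective hinf
    have hcover : ⋃ k, g ⁻¹' {e k} = Set.univ := by
      rw [← preimage_iUnion, iUnion_singleton_eq_range, he, preimage_range]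
    obtain ⟨k, hk⟩ | ⟨B, hB, hBe⟩ := hp.2 (fun k => g ⁻¹' {e k})
      (fun k => (he ▸ mem_range_self k : e k ∈ range g))
      (fun k l hkl => (disjoint_singleton.2 (he_inj.ne hkl)).preimage g) hcover
    · exact .inl ⟨e k, hk⟩
    · refine .inr ⟨B, hB, fun a ha b hb hab => ?_⟩
      obtain ⟨k, hk⟩ : g a ∈ range e := he ▸ mem_range_self a
      exact (hBe k).unique ⟨ha, hk.symm⟩ ⟨hb, (hk.trans hab).symm⟩

theorem IsSelective.exists_injOn {p : Ultrafilter ℕ} (hp : IsSelective p) {g : ℕ → ℕ}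
    (hg : Tendsto g cofinite cofinite) : ∃ B ∈ p, InjOn g B :=
  (hp.exists_fiber_mem_or_injOn g).resolve_left fun ⟨c, hc⟩ =>
    Ultrafilter.compl_notMem_iff.2 hc
      (hp.le_cofinite (hg (finite_singleton c).compl_mem_cofinite))

/-- A P-point: a free ultrafilter in which every sequence of members has a pseudo-intersection. -/
def IsPPoint (p : Ultrafilter ℕ) : Prop :=
  IsFreeUltrafilter p ∧
    ∀ S : ℕ → Set ℕ, (∀ n, S n ∈ p) → ∃ C ∈ p, ∀ n, (C \ S n).Finite

theorem IsSelective.isPPoint {p : Ultrafilter ℕ} (hp : IsSelective p) : IsPPoint p := by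
  refine ⟨hp.1, fun S hS => ?_⟩
  -- `sInf ∅ = 0`: on the points that lie in every `S n` the value of `g` is irrelevant.
  let g : ℕ → ℕ := fun k => sInf {n | k ∉ S n}
  obtain ⟨c, hc⟩ | ⟨B, hB, hinj⟩ := hp.exists_fiber_mem_or_injOn g
  · refine ⟨_, inter_mem hc (hS c), fun n => ?_⟩
    have hsub : g ⁻¹' {c} ∩ S c ⊆ S n := fun k ⟨hk, hkc⟩ => by_contra fun hn =>
      (hk ▸ Nat.sInf_mem (s := {n | k ∉ S n}) ⟨n, hn⟩ : k ∉ S c) hkc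
    rw [sdiff_eq_empty.2 hsub]
    exact finite_empty
  · refine ⟨B, hB, fun n => ?_⟩
    have hmaps : MapsTo g (B \ S n) (Iic n) := fun k hk => Nat.sInf_le hk.2
    exact (finite_Iic n).of_injOn hmaps (hinj.mono sdiff_subset)

theorem IsPPoint.exists_finite_diff {p : Ultrafilter ℕ} (hp : IsPPoint p) {κ : Type*} [Countable κ]
    (S : κ → Set ℕ) (hS : ∀ a, S a ∈ p) : ∃ C ∈ p, ∀ a, (C \ S a).Finite := by
  cases isEmpty_or_nonempty κ
  · exact ⟨univ, univ_mem, isEmptyElim⟩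
  · obtain ⟨f, hf⟩ := exists_surjective_nat κ
    simpa only [hf.forall, Function.comp_apply] using hp.2 (S ∘ f) fun n => hS (f n)

theorem IsPPoint.map {p : Ultrafilter ℕ} (hp : IsPPoint p) {g : ℕ → ℕ}
    (hg : Tendsto g cofinite cofinite) : IsPPoint (p.map g) := by
  refine ⟨isFreeUltrafilter_iff_le_cofinite.2
    (hg.mono_left (isFreeUltrafilter_iff_le_cofinite.1 hp.1)), fun S hS => ?_⟩
  obtain ⟨C, hC, hCS⟩ := hp.2 (fun n => g ⁻¹' S n) hS
  refine ⟨g '' C, image_mem_map hC, fun n => ((hCS n).image g).subset ?_⟩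
  rintro _ ⟨⟨k, hk, rfl⟩, hkS⟩
  exact ⟨k, ⟨hk, hkS⟩, rfl⟩

theorem IsSelective.map_ne_map {p q : Ultrafilter ℕ} (hq : IsSelective q) (hpq : ¬ RKle p q)
    {g : ℕ → ℕ} (hg : Tendsto g cofinite cofinite) : p.map g ≠ q.map g := by
  intro h
  obtain ⟨B, hB, hinj⟩ := hq.exists_injOn hg
  have hinv : Function.invFunOn g B ∘ g =ᶠ[(q : Filter ℕ)] id := by
    filter_upwards [hB] with k hk using hinj.leftInvOn_invFunOn hk
  refine hpq ⟨Function.invFunOn g B ∘ g, ?_⟩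
  rw [← Ultrafilter.map_map, h, Ultrafilter.map_map]
  exact Ultrafilter.coe_injective (by rw [Ultrafilter.coe_map, map_congr hinv, map_id])

theorem exists_strictMono_le_succ (F : ℕ → ℕ) :
    ∃ a : ℕ → ℕ, StrictMono a ∧ a 0 = 0 ∧ ∀ n, F (a n) ≤ a (n + 1) := by
  let a : ℕ → ℕ := fun n => Nat.rec 0 (fun _ x => max (x + 1) (F x)) n
  exact ⟨a, strictMono_nat_of_lt_succ fun n => Nat.lt_of_succ_le (le_max_left _ _), rfl,
    fun n => le_max_right _ _⟩

theorem exists_interval_index {a : ℕ → ℕ} (ha : StrictMono a) (ha0 : a 0 = 0) :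
    ∃ π : ℕ → ℕ, (∀ k, k ∈ Ico (a (π k)) (a (π k + 1))) ∧ Monotone π ∧ Tendsto π atTop atTop := by
  have hcover : ⋃ n, Ico (a n) (a (n + 1)) = Ici (a 0) :=
    iUnion_Ico_map_succ_eq_Ici (fun n => ha.monotone bot_le)
      ha.not_bddAbove_range_of_isSuccArchimedean
  have hmem (k : ℕ) : ∃ n, k ∈ Ico (a n) (a (n + 1)) :=
    mem_iUnion.1 (hcover ▸ (by simp [ha0] : k ∈ Ici (a 0)))
  choose π hπ using hmem
  refine ⟨π, hπ, fun k l hkl => ?_, tendsto_atTop.2 fun n => ?_⟩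
  · exact Nat.lt_succ_iff.1 (ha.lt_iff_lt.1 ((hπ k).1.trans_lt (hkl.trans_lt (hπ l).2)))
  · filter_upwards [eventually_ge_atTop (a n)] with k hk
    exact Nat.lt_succ_iff.1 (ha.lt_iff_lt.1 (hk.trans_lt (hπ k).2))

theorem exists_finite_reachable {ι S : Type*} (s₀ : S) (step : S → ℕ → ι → S) {e : ι → ℕ}
    (he : Function.Injective e) :
    ∃ R : ℕ → Set S, (∀ l, (R l).Finite) ∧ Monotone R ∧ s₀ ∈ R 0 ∧
      ∀ l, ∀ s ∈ R l, ∀ i, e i ≤ l → step s l i ∈ R (l + 1) := by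
  let R : ℕ → Set S := fun l =>
    Nat.rec {s₀} (fun l R => R ∪ ⋃ i ∈ e ⁻¹' Iic l, (step · l i) '' R) l
  refine ⟨R, fun l => ?_, monotone_nat_of_le_succ fun l => subset_union_left, rfl,
    fun l s hs i hi => .inr (mem_biUnion hi (mem_image_of_mem _ hs))⟩
  induction l with
  | zero => exact finite_singleton s₀
  | succ l ih =>
    exact ih.union (((finite_Iic l).preimage he.injOn).biUnion fun i _ => ih.image _)

variable {ι : Type*} [Countable ι]

theorem exists_pairwise_disjoint_mem_of_isPPoint {p : ι → Ultrafilter ℕ}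
    (hp : ∀ i, IsPPoint (p i)) (hinj : Function.Injective p) :
    ∃ Z : ι → Set ℕ, (∀ i, Z i ∈ p i) ∧ Pairwise fun i j => Disjoint (Z i) (Z j) := by
  obtain ⟨e, he⟩ := exists_injective_nat ι
  have hfin (i : ι) : {j | e j < e i}.Finite := (finite_Iio (e i)).preimage he.injOn
  have hsep (i j : ι) : ∃ V ∈ p i, ∃ V' ∈ p j, i ≠ j → Disjoint V V' := by
    obtain rfl | hij := eq_or_ne i j
    · exact ⟨univ, univ_mem, univ, univ_mem, fun h => (h rfl).elim⟩
    · obtain ⟨V, hV, V', hV', hdisj⟩ := Filter.disjoint_iff.1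
        (Ultrafilter.disjoint_iff_not_le.2 (Ultrafilter.coe_le_coe.not.2 (hinj.ne hij)))
      exact ⟨V, hV, V', hV', fun _ => hdisj⟩
  choose V hV V' hV' hdisj using hsep
  let W : ι → ι → Set ℕ := fun i j => V i j ∩ V' j i
  have hW (i j : ι) : W i j ∈ p i := inter_mem (hV i j) (hV' j i)
  choose C hC hCW using fun i => (hp i).exists_finite_diff (W i) (hW i)
  let Z : ι → Set ℕ := fun i => C i ∩ ⋂ j ∈ {j | e j < e i}, W i j ∩ (C j \ W j i)ᶜ
  have hZ {i j : ι} (hji : e j < e i) : Disjoint (Z i) (Z j) := by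
    refine disjoint_left.2 fun k ⟨_, hki⟩ ⟨hkj, _⟩ => ?_
    obtain ⟨hkW, hkC⟩ := mem_iInter₂.1 hki j hji
    exact (hdisj i j (he.ne_iff.1 hji.ne')).notMem_of_mem_left hkW.1
      (not_not.1 fun h => hkC ⟨hkj, fun hkW' => h hkW'.2⟩)
  refine ⟨Z, fun i => inter_mem (hC i) ((biInter_mem (hfin i)).2 fun j _ =>
    inter_mem (hW i j) ?_), fun i j hij => ?_⟩
  · exact isFreeUltrafilter_iff_le_cofinite.1 (hp i).1 (hCW j i).compl_mem_cofinite
  · exact (he.ne hij).lt_or_gt.elim (fun h => (hZ h).symm) hZ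

theorem exists_mem_injective_of_finiteToOne {q : ι → Ultrafilter ℕ} (hq : ∀ i, IsSelective (q i))
    (hrk : Pairwise fun i j => ¬ RKle (q i) (q j)) {g : ℕ → ℕ} (hg : Tendsto g cofinite cofinite) :
    ∃ A : ι → Set ℕ, (∀ i, A i ∈ q i) ∧
      ∀ i j, ∀ l ∈ A i, ∀ k ∈ A j, g l = g k → i = j ∧ l = k := by
  choose B hB hinj using fun i => (hq i).exists_injOn hg
  obtain ⟨Z, hZ, hdisj⟩ := exists_pairwise_disjoint_mem_of_isPPoint
    (fun i => (hq i).isPPoint.map hg)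
    (fun i j h => by_contra fun hij => (hq j).map_ne_map (hrk hij) hg h)
  refine ⟨fun i => B i ∩ g ⁻¹' Z i, fun i => inter_mem (hB i) (hZ i), ?_⟩
  rintro i j l ⟨hlB, hlZ⟩ k ⟨hkB, hkZ⟩ hlk
  obtain rfl : i = j := by_contra fun hij =>
    (hdisj hij).notMem_of_mem_left hlZ (hlk ▸ hkZ)
  exact ⟨rfl, hinj i hlB hkB hlk⟩

theorem exists_mem_forall_lt_imp_add_two_le {q : ι → Ultrafilter ℕ} (hq : ∀ i, IsSelective (q i))
    (hrk : Pairwise fun i j => ¬ RKle (q i) (q j)) {π : ℕ → ℕ} (hπ : Monotone π)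
    (hπ_lim : Tendsto π atTop atTop) :
    ∃ A : ι → Set ℕ, (∀ i, A i ∈ q i) ∧ (Pairwise fun i j => Disjoint (A i) (A j)) ∧
      ∀ i j, ∀ l ∈ A i, ∀ k ∈ A j, l < k → π l + 2 ≤ π k := by
  -- Indices of `π` that are equal or adjacent are identified by `⌊π / 2⌋` or by `⌊(π + 1) / 2⌋`.
  have hhalf (b : ℕ) : Tendsto (fun k => (π k + b) / 2) cofinite cofinite := by
    rw [Nat.cofinite_eq_atTop]
    exact (Nat.tendsto_div_const_atTop two_ne_zero).comp ((tendsto_add_atTop_nat b).comp hπ_lim)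
  obtain ⟨A₀, hA₀, hsep₀⟩ := exists_mem_injective_of_finiteToOne hq hrk (hhalf 0)
  obtain ⟨A₁, hA₁, hsep₁⟩ := exists_mem_injective_of_finiteToOne hq hrk (hhalf 1)
  refine ⟨fun i => A₀ i ∩ A₁ i, fun i => inter_mem (hA₀ i) (hA₁ i), fun i j hij => ?_, ?_⟩
  · exact disjoint_left.2 fun k hi hj => hij (hsep₀ i j k hi.1 k hj.1 rfl).1
  rintro i j l ⟨hl₀, hl₁⟩ k ⟨hk₀, hk₁⟩ hlk
  have h₀ : (π l + 0) / 2 ≠ (π k + 0) / 2 := fun h => hlk.ne (hsep₀ i j l hl₀ k hk₀ h).2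
  have h₁ : (π l + 1) / 2 ≠ (π k + 1) / 2 := fun h => hlk.ne (hsep₁ i j l hl₁ k hk₁ h).2
  have := hπ hlk.le
  omega

theorem exists_mem_forall_lt_imp_mem {q : ι → Ultrafilter ℕ} (hq : ∀ i, IsSelective (q i))
    (hrk : Pairwise fun i j => ¬ RKle (q i) (q j)) {B : ι → ℕ → Set ℕ} (hB : ∀ i l, B i l ∈ q i)
    (hanti : ∀ i, Antitone (B i)) :
    ∃ A : ι → Set ℕ, (∀ i, A i ∈ q i) ∧ (Pairwise fun i j => Disjoint (A i) (A j)) ∧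
      (∀ i, A i ⊆ B i 0) ∧ ∀ i j, ∀ l ∈ A i, ∀ k ∈ A j, l < k → k ∈ B j l := by
  obtain ⟨e, he⟩ := exists_injective_nat ι
  choose C hC hCB using fun i => (hq i).isPPoint.exists_finite_diff (B i) (hB i)
  have hF (m : ℕ) : ∃ b, ∀ i, e i ≤ m → ∀ k ∈ C i, b ≤ k → k ∈ B i m := by
    have hfin : (⋃ i ∈ e ⁻¹' Iic m, C i \ B i m).Finite :=
      ((finite_Iic m).preimage he.injOn).biUnion fun i _ => hCB i m
    obtain ⟨b, hb⟩ := hfin.bddAbove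
    exact ⟨b + 1, fun i hi k hk hbk => by_contra fun hkB =>
      (hb (mem_biUnion hi ⟨hk, hkB⟩)).not_gt hbk⟩
  choose F hF using hF
  obtain ⟨a, ha, ha0, haF⟩ := exists_strictMono_le_succ F
  obtain ⟨π, hπ, hπ_mono, hπ_lim⟩ := exists_interval_index ha ha0
  obtain ⟨A, hA, hdisj, hgap⟩ := exists_mem_forall_lt_imp_add_two_le hq hrk hπ_mono hπ_lim
  refine ⟨fun i => A i ∩ (C i ∩ B i (e i)), fun i => inter_mem (hA i) (inter_mem (hC i) (hB i _)),
    fun i j hij => (hdisj hij).mono inter_subset_left inter_subset_left,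
    fun i k hk => hanti i (Nat.zero_le _) hk.2.2, ?_⟩
  rintro i j l ⟨hl, -⟩ k ⟨hk, hkC, hkB⟩ hlk
  obtain hj | hj := le_total (e j) (a (π l + 1))
  · refine hanti j (hπ l).2.le (hF _ j hj k hkC ?_)
    calc F (a (π l + 1)) ≤ a (π l + 2) := haF _
      _ ≤ a (π k) := ha.monotone (hgap i j l hl k hk hlk)
      _ ≤ k := (hπ k).1
  · exact hanti j ((hπ l).2.le.trans hj) hkB

theorem exists_play {q : ι → Ultrafilter ℕ} (hq : ∀ i, IsSelective (q i))
    (hrk : Pairwise fun i j => ¬ RKle (q i) (q j)) {S : Type*} (s₀ : S) (step : S → ℕ → ι → S)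
    {good : S → ι → Set ℕ} (hgood : ∀ s i, good s i ∈ q i) :
    ∃ (A : ι → Set ℕ) (s : ℕ → S), (∀ i, A i ∈ q i) ∧ s 0 = s₀ ∧
      (∀ i, ∀ k ∈ A i, k ∈ good (s k) i ∧ s (k + 1) = step (s k) k i) ∧
      ∀ k, (∀ i, k ∉ A i) → s (k + 1) = s k := by
  classical
  obtain ⟨e, he⟩ := exists_injective_nat ι
  obtain ⟨R, hR_fin, hR_mono, hs₀R, hR_step⟩ := exists_finite_reachable s₀ step he
  -- The state at time `k` is the one reached right after the last earlier hit `l`, so it lies in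
  -- the finite set `R (l + 1)`; hence `k ∈ B i l` already forces `k ∈ good (s k) i`.
  let B : ι → ℕ → Set ℕ := fun i l => Ici (e i) ∩ ⋂ s ∈ R (l + 1), good s i
  have hB (i : ι) (l : ℕ) : B i l ∈ q i :=
    inter_mem ((hq i).le_cofinite (Nat.cofinite_eq_atTop ▸ Ici_mem_atTop _))
      ((biInter_mem (hR_fin (l + 1))).2 fun s _ => hgood s i)
  have hB_anti (i : ι) : Antitone (B i) := fun l m hlm =>
    inter_subset_inter_right _ (biInter_subset_biInter_left (hR_mono (by omega)))
  obtain ⟨A, hA, hdisj, hA0, hAB⟩ := exists_mem_forall_lt_imp_mem hq hrk hB hB_anti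
  let s : ℕ → S := fun k =>
    Nat.rec s₀ (fun k s => if h : ∃ i, k ∈ A i then step s k h.choose else s) k
  have hs_hit (i : ι) (k : ℕ) (hk : k ∈ A i) : s (k + 1) = step (s k) k i := by
    have h : ∃ i, k ∈ A i := ⟨i, hk⟩
    have hi : h.choose = i := by_contra fun hne => disjoint_left.1 (hdisj hne) h.choose_spec hk
    exact (dif_pos h).trans (by rw [hi])
  have hs_miss (k : ℕ) (hk : ∀ i, k ∉ A i) : s (k + 1) = s k := dif_neg (not_exists.2 hk)
  have hinv (k : ℕ) : s k ∈ R k ∧ ∀ i, ∀ l ∈ A i, k ≤ l → l ∈ good (s k) i := by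
    induction k with
    | zero =>
      exact ⟨hs₀R, fun i l hl _ => mem_iInter₂.1 (hA0 i hl).2 s₀ (hR_mono zero_le_one hs₀R)⟩
    | succ k ih =>
      by_cases hk : ∃ i, k ∈ A i
      · obtain ⟨i, hki⟩ := hk
        have hsR : s (k + 1) ∈ R (k + 1) :=
          hs_hit i k hki ▸ hR_step k _ ih.1 i (hA0 i hki).1
        exact ⟨hsR, fun j l hl hkl => mem_iInter₂.1 (hAB i j k hki l hl hkl).2 _ hsR⟩
      · rw [hs_miss k (not_exists.1 hk)]
        exact ⟨hR_mono k.le_succ ih.1, fun i l hl hkl => ih.2 i l hl (by omega)⟩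
  exact ⟨A, s, hA, rfl, fun i k hk => ⟨(hinv k).2 i k hk le_rfl, hs_hit i k hk⟩, hs_miss⟩

end SelectiveUltrafilters

section GeneralizedBaire

theorem tendsto_atTop_of_frequently_lt_succ {f : ℕ → ℕ} (hf : Monotone f)
    (hlt : ∃ᶠ k in atTop, f k < f (k + 1)) : Tendsto f atTop atTop := by
  refine tendsto_atTop_atTop_of_monotone hf fun m => ?_
  induction m with
  | zero => exact ⟨0, Nat.zero_le _⟩
  | succ m ih =>
    obtain ⟨a, ha⟩ := ih
    obtain ⟨k, hak, hk⟩ := frequently_atTop.1 hlt a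
    exact ⟨k + 1, Nat.succ_le_of_lt ((ha.trans (hf hak)).trans_lt hk)⟩

variable {X : Type*} [TopologicalSpace X] [RegularSpace X]

theorem exists_isOpen_closure_subset {U : Set X} (hU : IsOpen U) (hne : U.Nonempty) :
    ∃ V : Set X, IsOpen V ∧ V.Nonempty ∧ closure V ⊆ U := by
  obtain ⟨x, hx⟩ := hne
  obtain ⟨V, hV, hxV, hVU⟩ := isCompact_singleton.exists_isOpen_closure_subset
    (hU.mem_nhdsSet.2 (singleton_subset_iff.2 hx))
  exact ⟨V, hV, ⟨x, hxV rfl⟩, hVU⟩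

theorem exists_isOpen_closure_subset_and_imp {U W : Set X} (hU : IsOpen U) (hne : U.Nonempty)
    (hW : IsOpen W) :
    ∃ V : Set X, (IsOpen V ∧ V.Nonempty) ∧ closure V ⊆ U ∧
      ((U ∩ W).Nonempty → closure V ⊆ W) := by
  by_cases hUW : (U ∩ W).Nonempty
  · obtain ⟨V, hV, hVne, hVsub⟩ := exists_isOpen_closure_subset (hU.inter hW) hUW
    exact ⟨V, ⟨hV, hVne⟩, hVsub.trans inter_subset_left, fun _ => hVsub.trans inter_subset_right⟩
  · obtain ⟨V, hV, hVne, hVsub⟩ := exists_isOpen_closure_subset hU hne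
    exact ⟨V, ⟨hV, hVne⟩, hVsub, fun h => (hUW h).elim⟩

variable {ι : Type*} [Countable ι] {q : ι → Ultrafilter ℕ} [CompactSpace X] {G : ι → ℕ → ℕ → Set X}

theorem exists_mem_forall_eventually_mem (hq : ∀ i, IsSelective (q i))
    (hrk : Pairwise fun i j => ¬ RKle (q i) (q j)) (hG_open : ∀ i m k, IsOpen (G i m k))
    (hG_anti : ∀ i k, Antitone fun m => G i m k)
    (hG : ∀ i m U, IsOpen U → U.Nonempty → ∀ᶠ k in q i, (U ∩ G i m k).Nonempty)
    {U : Set X} (hU : IsOpen U) (hne : U.Nonempty) :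
    ∃ x ∈ U, ∀ i m, ∀ᶠ k in q i, x ∈ G i m k := by
  choose V hV hVsub hVG using fun (s : ℕ × {V : Set X // IsOpen V ∧ V.Nonempty}) (k : ℕ) (i : ι) =>
    exists_isOpen_closure_subset_and_imp s.2.2.1 s.2.2.2 (hG_open i s.1 k)
  obtain ⟨V₀, hV₀, hV₀ne, hV₀U⟩ := exists_isOpen_closure_subset hU hne
  obtain ⟨A, s, hA, hs0, hhit, hmiss⟩ := exists_play hq hrk
    (S := ℕ × {V : Set X // IsOpen V ∧ V.Nonempty}) (0, ⟨V₀, hV₀, hV₀ne⟩)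
    (fun s k i => (s.1 + 1, ⟨V s k i, hV s k i⟩)) (fun s i => hG i s.1 s.2 s.2.2.1 s.2.2.2)
  have hs_succ (k : ℕ) : closure (s (k + 1)).2.1 ⊆ closure (s k).2.1 ∧ (s k).1 ≤ (s (k + 1)).1 := by
    by_cases hk : ∃ i, k ∈ A i
    · obtain ⟨i, hki⟩ := hk
      rw [(hhit i k hki).2]
      exact ⟨(hVsub _ k i).trans subset_closure, Nat.le_succ _⟩
    · rw [hmiss k (not_exists.1 hk)]
      exact ⟨subset_rfl, le_rfl⟩
  have hstage (i : ι) : Tendsto (fun k => (s k).1) atTop atTop := by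
    refine tendsto_atTop_of_frequently_lt_succ (monotone_nat_of_le_succ fun k => (hs_succ k).2)
      (Frequently.filter_mono ?_ (Nat.cofinite_eq_atTop ▸ (hq i).le_cofinite))
    refine (Filter.Eventually.mono (hA i) fun k hk => ?_).frequently
    rw [(hhit i k hk).2]
    exact Nat.lt_succ_self _
  obtain ⟨x, hx⟩ := IsCompact.nonempty_iInter_of_sequence_nonempty_isCompact_isClosed
    (fun k => closure (s k).2.1) (fun k => (hs_succ k).1) (fun k => (s k).2.2.2.closure)
    isClosed_closure.isCompact (fun k => isClosed_closure)
  rw [mem_iInter] at hx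
  refine ⟨x, hV₀U (by simpa only [hs0] using hx 0), fun i m => ?_⟩
  have hlarge : ∀ᶠ k in q i, m ≤ (s k).1 :=
    (hq i).le_cofinite (Nat.cofinite_eq_atTop ▸ (hstage i).eventually_ge_atTop m)
  filter_upwards [hA i, hlarge] with k hk hmk
  obtain ⟨hgood, hs⟩ := hhit i k hk
  exact hG_anti i k hmk (hVG _ k i hgood (by simpa only [hs] using hx (k + 1)))

theorem exists_mem_iInter_forall_eventually_mem (hq : ∀ i, IsSelective (q i))
    (hrk : Pairwise fun i j => ¬ RKle (q i) (q j)) (hG_open : ∀ i m k, IsOpen (G i m k))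
    (hG_anti : ∀ i k, Antitone fun m => G i m k)
    (hG : ∀ i m U, IsOpen U → U.Nonempty → ∀ᶠ k in q i, (U ∩ G i m k).Nonempty)
    {O : ℕ → Set X} (hO : ∀ j, IsOpen (O j)) (hO_dense : ∀ j, Dense (O j))
    {U : Set X} (hU : IsOpen U) (hne : U.Nonempty) :
    ∃ x ∈ U, x ∈ ⋂ j, O j ∧ ∀ i m, ∀ᶠ k in q i, x ∈ G i m k := by
  cases isEmpty_or_nonempty ι with
  | inl _ =>
    obtain ⟨x, hxU, hxO⟩ := (dense_iInter_of_isOpen hO hO_dense).inter_open_nonempty U hU hne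
    exact ⟨x, hxU, hxO, isEmptyElim⟩
  | inr _ =>
    let P : ℕ → Set X := fun m => ⋂ j ∈ Iic m, O j
    have hP (m : ℕ) : IsOpen (P m) := (finite_Iic m).isOpen_biInter fun j _ => hO j
    have hP_dense (m : ℕ) : Dense (P m) :=
      dense_biInter_of_isOpen (fun j _ => hO j) (to_countable _) fun j _ => hO_dense j
    have hP_anti : Antitone P := fun m n hmn => biInter_subset_biInter_left (Iic_subset_Iic.2 hmn)
    obtain ⟨x, hxU, hx⟩ := exists_mem_forall_eventually_mem (G := fun i m k => P m ∩ G i m k) hq hrk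
      (fun i m k => (hP m).inter (hG_open i m k))
      (fun i k m n hmn => inter_subset_inter (hP_anti hmn) (hG_anti i k hmn))
      (fun i m W hW hWne => by
        simpa only [inter_assoc] using hG i m _ (hW.inter (hP m))
          ((hP_dense m).inter_open_nonempty W hW hWne)) hU hne
    refine ⟨x, hxU, mem_iInter.2 fun j => ?_, fun i m => (hx i m).mono fun k hk => hk.2⟩
    obtain ⟨k, hk⟩ := (hx (Classical.arbitrary ι) j).exists
    exact mem_iInter₂.1 hk.1 j (mem_Iic.2 le_rfl)

end GeneralizedBaire

section Homomorphisms

variable {I : Type*}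

theorem isOpen_exists_ge_linearCombination_mem (r : ℕ → I →₀ ℤ) {V : Set UnitAddCircle}
    (hV : IsOpen V) (m : ℕ) :
    IsOpen {φ : I → UnitAddCircle | ∃ n ≥ m, Finsupp.linearCombination ℤ φ (r n) ∈ V} := by
  simp only [ofPred_exists, ← exists_prop]
  exact isOpen_biUnion fun n _ => hV.preimage (continuous_linearCombination_apply (r n))

theorem dense_exists_ge_linearCombination_mem {r : ℕ → I →₀ ℤ} (hr : Function.Injective r)
    {V : Set UnitAddCircle} (hV : IsOpen V) (hne : V.Nonempty) (m : ℕ) :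
    Dense {φ : I → UnitAddCircle | ∃ n ≥ m, Finsupp.linearCombination ℤ φ (r n) ∈ V} := by
  refine dense_iff_inter_open.2 fun U hU hUne => ?_
  have hge : ∀ᶠ n in cofinite, m ≤ n := Nat.cofinite_eq_atTop ▸ eventually_ge_atTop m
  obtain ⟨n, ⟨φ, hφU, hφV⟩, hmn⟩ :=
    ((eventually_exists_linearCombination_mem hr hU hUne hV hne).and hge).exists
  exact ⟨φ, hφU, n, hmn, hφV⟩

theorem isOpen_forall_dist_linearCombination_lt {L : Type*} (g : L → I →₀ ℤ) (b : L → I) {F : Set L}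
    (hF : F.Finite) (ε : ℝ) :
    IsOpen {φ : I → UnitAddCircle | ∀ ξ ∈ F,
      dist (Finsupp.linearCombination ℤ φ (g ξ)) (φ (b ξ)) < ε} := by
  simp only [ofPred_forall]
  exact hF.isOpen_biInter fun ξ _ =>
    isOpen_lt ((continuous_linearCombination_apply _).dist (continuous_apply _)) continuous_const

theorem not_exists_tendsto_of_frequently_mem {α X : Type*} [TopologicalSpace X] {l : Filter α}
    {s : α → X} {V W : Set X} (hdisj : Disjoint (closure V) (closure W))
    (hV : ∃ᶠ n in l, s n ∈ V) (hW : ∃ᶠ n in l, s n ∈ W) : ¬ ∃ x, Tendsto s l (𝓝 x) :=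
  fun ⟨_, hx⟩ => hdisj.notMem_of_mem_left
    (mem_closure_of_frequently_of_tendsto hV hx) (mem_closure_of_frequently_of_tendsto hW hx)

theorem isPLim_of_forall_eventually_dist_lt {X : Type*} [PseudoMetricSpace X] {p : Ultrafilter ℕ}
    {s : ℕ → X} {x : X} (h : ∀ᶠ m : ℕ in atTop, ∀ᶠ k in p, dist (s k) x < 1 / (m + 1)) :
    IsPLim p s x := by
  intro U hU
  obtain ⟨ε, hε, hball⟩ := Metric.mem_nhds_iff.1 hU
  obtain ⟨m, hm, hmε⟩ :=
    (h.and (tendsto_one_div_add_atTop_nhds_zero_nat.eventually_lt_const hε)).exists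
  exact hm.mono fun k hk => hball (hk.trans hmε)

theorem exists_isOpen_dense_forall_mem_not_tendsto {r : ℕ → I →₀ ℤ} (hr : Function.Injective r) :
    ∃ O : ℕ → Set (I → UnitAddCircle), (∀ m, IsOpen (O m)) ∧ (∀ m, Dense (O m)) ∧
      ∀ φ ∈ ⋂ m, O m,
        ¬ ∃ x, Tendsto (fun n => Finsupp.linearCombination ℤ φ (r n)) atTop (𝓝 x) := by
  obtain ⟨y, z, hyz⟩ := exists_pair_ne UnitAddCircle
  obtain ⟨V, hyV, hV, W, hzW, hW, hVW⟩ := exists_open_nhds_disjoint_closure hyz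
  refine ⟨fun m => {φ | ∃ n ≥ m, Finsupp.linearCombination ℤ φ (r n) ∈ V} ∩
      {φ | ∃ n ≥ m, Finsupp.linearCombination ℤ φ (r n) ∈ W},
    fun m => (isOpen_exists_ge_linearCombination_mem r hV m).inter
      (isOpen_exists_ge_linearCombination_mem r hW m),
    fun m => (dense_exists_ge_linearCombination_mem hr hV ⟨y, hyV⟩ m).inter_of_isOpen_left
      (dense_exists_ge_linearCombination_mem hr hW ⟨z, hzW⟩ m)
      (isOpen_exists_ge_linearCombination_mem r hV m), fun φ hφ => ?_⟩
  rw [mem_iInter] at hφ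
  exact not_exists_tendsto_of_frequently_mem hVW (frequently_atTop.2 fun m => (hφ m).1)
    (frequently_atTop.2 fun m => (hφ m).2)

theorem exists_linearCombination_isPLim_not_tendsto {ι : Type*} [Countable ι]
    {q : ι → Ultrafilter ℕ} (hq : ∀ i, IsSelective (q i))
    (hrk : Pairwise fun i j => ¬ RKle (q i) (q j)) {L : ι → Type*} [∀ i, Countable (L i)]
    {g : ∀ i, L i → ℕ → I →₀ ℤ} (b : ∀ i, L i → I)
    (hg : ∀ i, EventuallyIndependent (q i : Filter ℕ)
      (Sum.elim (g i) fun ζ _ => Finsupp.single ζ 1))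
    {d : I →₀ ℤ} (hd : d ≠ 0) {r : ℕ → I →₀ ℤ} (hr : Function.Injective r) :
    ∃ φ : I → UnitAddCircle, Finsupp.linearCombination ℤ φ d ≠ 0 ∧
      (∀ i ξ, IsPLim (q i) (fun k => Finsupp.linearCombination ℤ φ (g i ξ k)) (φ (b i ξ))) ∧
      ¬ ∃ x, Tendsto (fun n => Finsupp.linearCombination ℤ φ (r n)) atTop (𝓝 x) := by
  choose e he using fun i => exists_injective_nat (L i)
  have hfin (i : ι) (m : ℕ) : {ξ | e i ξ ≤ m}.Finite := (finite_Iic m).preimage (he i).injOn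
  let G : ι → ℕ → ℕ → Set (I → UnitAddCircle) := fun i m k => {φ | ∀ ξ ∈ {ξ | e i ξ ≤ m},
    dist (Finsupp.linearCombination ℤ φ (g i ξ k)) (φ (b i ξ)) < 1 / (m + 1)}
  have hG_open (i : ι) (m k : ℕ) : IsOpen (G i m k) :=
    isOpen_forall_dist_linearCombination_lt (fun ξ => g i ξ k) (b i) (hfin i m) _
  have hG_anti (i : ι) (k : ℕ) : Antitone fun m => G i m k := fun m n hmn φ hφ ξ hξ =>
    (hφ ξ (le_trans hξ hmn)).trans_le (Nat.one_div_le_one_div hmn)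
  obtain ⟨O, hO, hO_dense, hO_div⟩ := exists_isOpen_dense_forall_mem_not_tendsto hr
  obtain ⟨φ, hφd, hφO, hφG⟩ := exists_mem_iInter_forall_eventually_mem hq hrk hG_open hG_anti
    (fun i m U hU hne => (hg i).eventually_nonempty_inter_dist_lt hU hne (hfin i m)
      Nat.one_div_pos_of_nat)
    hO hO_dense (isOpen_ne.preimage (continuous_linearCombination_apply d))
    (exists_linearCombination_ne_zero UnitAddCircle hd)
  refine ⟨φ, hφd, fun i ξ => isPLim_of_forall_eventually_dist_lt ?_, hO_div φ hφO⟩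
  filter_upwards [eventually_ge_atTop (e i ξ)] with m hm
  exact (hφG i m).mono fun k hk => hk ξ hm

theorem statement14_general {ι : Type*} {q : ι → Ultrafilter ℕ}
    (hq : ∀ i, IsSelective (q i)) (hrk : Pairwise fun i j => ¬ RKle (q i) (q j))
    {h : I → ℕ → I →₀ ℤ} {J : ι → Set I} (hJ : Pairwise fun i j => Disjoint (J i) (J j))
    (hind : ∀ i, EventuallyIndependent (q i : Filter ℕ)
      (Sum.elim (fun ξ : J i => h ξ) fun ζ _ => Finsupp.single ζ 1))
    {d : I →₀ ℤ} (hd : d ≠ 0) {r : ℕ → I →₀ ℤ} (hr : Function.Injective r)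
    {D : Set I} (hD : D.Countable) :
    ∃ φ : (I →₀ ℤ) →+ UnitAddCircle, φ d ≠ 0 ∧
      (∀ i, ∀ ξ ∈ D ∩ J i, IsPLim (q i) (fun k => φ (h ξ k)) (φ (Finsupp.single ξ 1))) ∧
      ¬ ∃ l, Tendsto (fun n => φ (r n)) atTop (𝓝 l) := by
  let K : Set ι := {i | (D ∩ J i).Nonempty}
  have hK : Countable K := countable_ofPred_nonempty_of_disjoint
    (fun i j hij => (hJ hij).mono inter_subset_right inter_subset_right)
    (fun i => inter_subset_left) hD
  have hL (i : K) : Countable ↥(D ∩ J i) := (hD.mono inter_subset_left).to_subtype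
  have hind' (i : K) : EventuallyIndependent (q i : Filter ℕ)
      (Sum.elim (fun ξ : ↥(D ∩ J i) => h ξ) fun ζ _ => Finsupp.single ζ 1) := by
    have hincl : Function.Injective (Sum.map (inclusion (inter_subset_right (s := D) (t := J i)))
        (id : I → I)) := (inclusion_injective _).sumMap Function.injective_id
    have hcomp := (hind i).comp_injective hincl
    rwa [Sum.elim_comp_map] at hcomp
  obtain ⟨φ, hφd, hφlim, hφr⟩ := exists_linearCombination_isPLim_not_tendsto
    (q := fun i : K => q i) (fun i => hq i) (fun i j hij => hrk (Subtype.coe_injective.ne hij))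
    (fun i => Subtype.val) hind' hd hr
  refine ⟨(Finsupp.linearCombination ℤ φ).toAddMonoidHom, hφd, fun i ξ hξ => ?_, hφr⟩
  simpa using hφlim ⟨i, ξ, hξ⟩ ⟨ξ, hξ⟩

end Homomorphisms

theorem statement14 (κ : Cardinal) (hκ : ℵ₀ ≤ κ) (hpow : κ ^ ℵ₀ = κ)
    (p : List (Set ℕ) → ℕ → Ultrafilter ℕ)
    (hsel : ∀ T, IsTower T → ∀ n, IsSelective (p T n))
    (hinc : ∀ T T', IsTower T → IsTower T' → ∀ n n' : ℕ, (T, n) ≠ (T', n') →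
      RKIncomp (p T n) (p T' n'))
    (hlast : ∀ T, IsTower T → ∀ n, lastOf T ∈ p T n)
    (h : Idx κ → (ℕ → GZ κ))
    (henum : ∀ g : ℕ → GZ κ, ∃ ξ : Idx κ, Ordinal.omega0 ≤ (ξ : Ordinal) ∧ h ξ = g)
    (hsupp : ∀ ξ : Idx κ, Ordinal.omega0 ≤ (ξ : Ordinal) → ∀ n : ℕ,
      ∀ α ∈ (h ξ n).support, (α : Ordinal) < (ξ : Ordinal))
    (J : List (Set ℕ) → ℕ → Set (Idx κ))
    (hJω : ∀ T, IsTower T → ∀ n : ℕ, ∀ ξ ∈ J T n, Ordinal.omega0 ≤ (ξ : Ordinal))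
    (hJdisj : ∀ T T', IsTower T → IsTower T' → ∀ n n' : ℕ, (T, n) ≠ (T', n') →
      Disjoint (J T n) (J T' n'))
    (hJdist : ∀ T, IsTower T → ∀ n : ℕ, ∀ ξ ∈ J T n, ∀ ζ ∈ J T n, ξ ≠ ζ →
      cls κ (p T n) (h ξ) ≠ cls κ (p T n) (h ζ))
    (hJli : ∀ T, IsTower T → ∀ n : ℕ, LinearIndependent ℚ
      (Sum.elim (fun ξ : J T n => cls κ (p T n) (h ↑ξ))
        (fun ζ : Idx κ => clsChi κ (p T n) ζ)))
    (d : GZ κ) (hd : d ≠ 0) (r : ℕ → GZ κ) (hr : Function.Injective r)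
    (D : Set (Idx κ)) (hDc : D.Countable) (hDi : D.Infinite)
    (hωD : ∀ ξ : Idx κ, (ξ : Ordinal) < Ordinal.omega0 → ξ ∈ D)
    (hdD : ↑d.support ⊆ D) (hrD : ∀ n : ℕ, ↑(r n).support ⊆ D)
    (hDJ : {Tn : List (Set ℕ) × ℕ | IsTower Tn.1 ∧ (D ∩ J Tn.1 Tn.2).Nonempty}.Infinite)
    (hDcl : ∀ ξ ∈ D, Ordinal.omega0 ≤ (ξ : Ordinal) → ∀ n : ℕ, ↑(h ξ n).support ⊆ D) :
    ∃ φ : ↥(Finsupp.supported ℤ ℤ D) →+ AddCircle (1 : ℝ),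
      φ ⟨d, mem_suppD hdD⟩ ≠ 0 ∧
      (∀ T : List (Set ℕ), ∀ hT : IsTower T, ∀ n : ℕ, ∀ ξ : Idx κ,
        ∀ hξD : ξ ∈ D, ∀ hξJ : ξ ∈ J T n,
        IsPLim (p T n)
          (fun k => φ ⟨h ξ k, mem_suppD (hDcl ξ hξD (hJω T hT n ξ hξJ) k)⟩)
          (φ ⟨chi κ ξ, chi_mem_suppD hξD⟩)) ∧
      ¬ ∃ l : AddCircle (1 : ℝ),
        Filter.Tendsto (fun n => φ ⟨r n, mem_suppD (hrD n)⟩) Filter.atTop (nhds l) := by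
  obtain ⟨φ, hφd, hφlim, hφr⟩ := statement14_general
    (ι := {Tn : List (Set ℕ) × ℕ // IsTower Tn.1}) (fun i => hsel i.1.1 i.2 i.1.2)
    (fun i j hij => (hinc _ _ i.2 j.2 _ _ (Subtype.coe_injective.ne hij)).1)
    (fun i j hij => hJdisj _ _ i.2 j.2 _ _ (Subtype.coe_injective.ne hij))
    (fun i => eventuallyIndependent_of_linearIndependent_cls (hJli i.1.1 i.2 i.1.2)) hd hr hDc
  exact ⟨φ.comp (Finsupp.supported ℤ ℤ D).toAddSubgroup.subtype, hφd,
    fun T hT n ξ hξD hξJ => hφlim ⟨(T, n), hT⟩ ξ ⟨hξD, hξJ⟩, hφr⟩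

end
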